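/- arXiv:1407.8421 — 2 statements merged into one kernel-verified Lean document; each statement's English description precedes it below -/
import Mathlib

section
/- For every real c > 0 there exists s₀ such that for all integers s ≥ s₀ and all integers r with 2s < r < 2s + c·√s, the function B_{r,s}(p) − 2p + 1 is strictly positive for all p ∈ [0,1). (Consequently the least r for which B_{r,s}(p) − 2p + 1 has a root in (0,1) satisfies r(s) ≥ 2s + c√s for all sufficiently large s, i.e. (r(s) − 2s)/√s → ∞.) -/
/-- `B r s p = ∑_{i=0}^{s-1} C(r,i) p^{r-i} (1-p)^i`, the probability that a
Binomial(r,p) random variable exceeds `r - s`. -/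
noncomputable def B (r s : ℕ) (p : ℝ) : ℝ :=
  ∑ i ∈ Finset.range s, (r.choose i : ℝ) * p ^ (r - i) * (1 - p) ^ i


lemma B_aux_lower (s d : ℕ) (p u : ℝ) (hp : 1 / 2 ≤ p) (hp1 : p ≤ 1) (hu : 0 < u)
    (h2 : 2 * (1 + u) ^ (s + d) ≤ (1 + u / 2) ^ (2 * s + d)) :
    1 / 4 ≤ B (2 * s + d) s p * Real.exp ((2 * s + d : ℕ) * (u ^ 2 / 4)) := by
  set r := 2 * s + d with hr
  have hq : 0 ≤ 1 - p := by linarith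
  have hp0 : 0 ≤ p := by linarith
  set w : ℕ → ℝ := fun i => (r.choose i : ℝ) * p ^ (r - i) * (1 - p) ^ i with hw
  have hw0 : ∀ i, 0 ≤ w i := fun i => by simp only [hw]; positivity
  have full : ∀ y : ℝ, ∑ i ∈ Finset.range (r + 1), w i * y ^ (r - i) = (1 - p + p * y) ^ r := by
    intro y
    rw [add_pow]
    apply Finset.sum_congr rfl
    intro i _
    simp only [hw, mul_pow]
    ring
  have split : ∀ f : ℕ → ℝ, ∑ i ∈ Finset.range (r + 1), f i
      = ∑ i ∈ Finset.range s, f i + ∑ i ∈ Finset.Ico s (r + 1), f i := by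
    intro f
    rw [Finset.sum_range_add_sum_Ico _ (by omega)]
  have hB : B r s p = ∑ i ∈ Finset.range s, w i := rfl
  have hB0 : 0 ≤ B r s p := by rw [hB]; exact Finset.sum_nonneg fun i _ => hw0 i
  set A := ∑ i ∈ Finset.range s, w i * (1 + u) ^ (r - i) with hA
  have hone : ∑ i ∈ Finset.range (r + 1), w i = 1 := by
    have := full 1
    simpa using this
  have tail : ∑ i ∈ Finset.Ico s (r + 1), w i * (1 + u) ^ (r - i) ≤ (1 + u) ^ (s + d) := by
    calc _ ≤ ∑ i ∈ Finset.Ico s (r + 1), w i * (1 + u) ^ (s + d) := by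
          apply Finset.sum_le_sum
          intro i hi
          rw [Finset.mem_Ico] at hi
          apply mul_le_mul_of_nonneg_left _ (hw0 i)
          exact pow_le_pow_right₀ (by linarith) (by omega)
      _ = (∑ i ∈ Finset.Ico s (r + 1), w i) * (1 + u) ^ (s + d) := by rw [Finset.sum_mul]
      _ ≤ 1 * (1 + u) ^ (s + d) := by
          apply mul_le_mul_of_nonneg_right _ (by positivity)
          have := split w
          rw [hone, ← hB] at this
          linarith
      _ = _ := one_mul _
  have hEZ := full (1 + u)
  rw [split] at hEZ
  set E := (1 - p + p * (1 + u)) ^ r with hE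
  have hE1 : (1 + u / 2) ^ r ≤ E := by
    apply pow_le_pow_left₀ (by positivity)
    nlinarith
  have hE0 : 0 < E := lt_of_lt_of_le (by positivity) hE1
  have hAE : E / 2 ≤ A := by linarith
  have cs : A ^ 2 ≤ B r s p * ∑ i ∈ Finset.range s, w i * ((1 + u) ^ 2) ^ (r - i) := by
    rw [hB]
    apply Finset.sum_sq_le_sum_mul_sum_of_sq_le_mul
    · intro i _; exact hw0 i
    · intro i _; exact mul_nonneg (hw0 i) (by positivity)
    · intro i _; apply le_of_eq; rw [mul_pow, ← pow_mul, ← pow_mul, mul_comm 2]; ring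
  have hW : ∑ i ∈ Finset.range s, w i * ((1 + u) ^ 2) ^ (r - i)
      ≤ E ^ 2 * Real.exp (r * (u ^ 2 / 4)) := by
    have h1 := full ((1 + u) ^ 2)
    rw [split] at h1
    have h3 : 0 ≤ ∑ i ∈ Finset.Ico s (r + 1), w i * ((1 + u) ^ 2) ^ (r - i) :=
      Finset.sum_nonneg fun i _ => mul_nonneg (hw0 i) (by positivity)
    have h4 : (1 - p + p * (1 + u) ^ 2) ^ r ≤ E ^ 2 * Real.exp (r * (u ^ 2 / 4)) := by
      rw [Real.exp_nat_mul, hE, ← pow_mul, mul_comm r 2, pow_mul, ← mul_pow]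
      apply pow_le_pow_left₀ (by positivity)
      have h5 := Real.add_one_le_exp (u ^ 2 / 4)
      have h6 : (1:ℝ) ≤ (1 - p + p * (1 + u)) ^ 2 := by nlinarith [mul_nonneg hp0 hu.le]
      calc 1 - p + p * (1 + u) ^ 2
          ≤ (1 - p + p * (1 + u)) ^ 2 + 1 * (u ^ 2 / 4) := by
            nlinarith [sq_nonneg ((p - 1 / 2) * u)]
        _ ≤ (1 - p + p * (1 + u)) ^ 2 + (1 - p + p * (1 + u)) ^ 2 * (u ^ 2 / 4) := by gcongr
        _ = (1 - p + p * (1 + u)) ^ 2 * (u ^ 2 / 4 + 1) := by ring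
        _ ≤ _ := by gcongr
    linarith
  have key : E ^ 2 * (1 / 4) ≤ E ^ 2 * (B r s p * Real.exp (r * (u ^ 2 / 4))) := by
    have : (E / 2) ^ 2 ≤ A ^ 2 := pow_le_pow_left₀ (by positivity) hAE 2
    have := mul_le_mul_of_nonneg_left hW hB0
    nlinarith
  exact le_of_mul_le_mul_left key (by positivity)

lemma B_aux_pow (s d : ℕ) (u : ℝ) (hu : 0 < u) (hu1 : u ≤ 1)
    (h : 1 + d * u ≤ s * (u ^ 2 / 16)) :
    2 * (1 + u) ^ (s + d) ≤ (1 + u / 2) ^ (2 * s + d) := by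
  have h1 : Real.exp (u ^ 2 / 16) ≤ 1 + u ^ 2 / 8 := by
    have := Real.one_sub_le_exp_neg (u ^ 2 / 16)
    rw [Real.exp_neg] at this
    have hz : u ^ 2 ≤ 1 := by nlinarith
    have h0 := Real.exp_pos (u ^ 2 / 16)
    have h2 : (1 - u ^ 2 / 16) * Real.exp (u ^ 2 / 16) ≤ 1 := by
      calc _ ≤ (Real.exp (u ^ 2 / 16))⁻¹ * Real.exp (u ^ 2 / 16) := by gcongr
        _ = 1 := inv_mul_cancel₀ h0.ne'
    have h3 : (1:ℝ) ≤ (1 - u ^ 2 / 16) * (1 + u ^ 2 / 8) := by nlinarith [sq_nonneg u]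
    exact le_of_mul_le_mul_left (h2.trans h3) (by linarith)
  have h2 : (1 + u) * Real.exp (u ^ 2 / 16) ≤ (1 + u / 2) ^ 2 := by
    calc _ ≤ (1 + u) * (1 + u ^ 2 / 8) := by gcongr
      _ ≤ _ := by nlinarith [mul_nonneg (sq_nonneg u) (sub_nonneg.2 hu1)]
  have h3 : (1 + u) ^ d ≤ Real.exp (d * u) := by
    rw [Real.exp_nat_mul]
    apply pow_le_pow_left₀ (by positivity)
    linarith [Real.add_one_le_exp u]
  have h4 : (2:ℝ) ≤ Real.exp 1 := by linarith [Real.add_one_le_exp 1]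
  calc 2 * (1 + u) ^ (s + d) = (1 + u) ^ s * (2 * (1 + u) ^ d) := by ring
    _ ≤ (1 + u) ^ s * (Real.exp 1 * Real.exp (d * u)) := by gcongr
    _ = (1 + u) ^ s * Real.exp (1 + d * u) := by rw [Real.exp_add]
    _ ≤ (1 + u) ^ s * Real.exp (s * (u ^ 2 / 16)) := by gcongr
    _ = ((1 + u) * Real.exp (u ^ 2 / 16)) ^ s := by rw [Real.exp_nat_mul, mul_pow]
    _ ≤ ((1 + u / 2) ^ 2) ^ s := by gcongr
    _ = (1 + u / 2) ^ (2 * s) * 1 := by rw [← pow_mul, mul_one]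
    _ ≤ (1 + u / 2) ^ (2 * s) * (1 + u / 2) ^ d := by
        gcongr
        exact one_le_pow₀ (by linarith)
    _ = _ := by rw [← pow_add]

lemma B_aux_tail (s d : ℕ) (p : ℝ) (hp : 1 / 2 ≤ p) (hp1 : p ≤ 1) :
    1 - B (2 * s + d) s p ≤ (4 * p * (1 - p)) ^ s * (2 * p) ^ d := by
  set r := 2 * s + d with hr
  have hq : 0 ≤ 1 - p := by linarith
  have hp0 : 0 ≤ p := by linarith
  have full : ∑ i ∈ Finset.range (r + 1), (r.choose i : ℝ) * p ^ (r - i) * (1 - p) ^ i = 1 := by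
    have h := add_pow (1 - p) p r
    rw [sub_add_cancel, one_pow] at h
    refine Eq.trans ?_ h.symm
    apply Finset.sum_congr rfl
    intro i _
    ring
  rw [← Finset.sum_range_add_sum_Ico _ (show s ≤ r + 1 by omega)] at full
  have h2 : ∑ i ∈ Finset.Ico s (r + 1), (r.choose i : ℝ) = 
      (2:ℝ) ^ r - ∑ i ∈ Finset.range s, (r.choose i : ℝ) := by
    have h := Nat.sum_range_choose r
    rw [← Finset.sum_range_add_sum_Ico _ (show s ≤ r + 1 by omega)] at h
    have h' : ((∑ i ∈ Finset.range s, r.choose i + ∑ i ∈ Finset.Ico s (r + 1), r.choose i : ℕ) : ℝ)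
        = ((2 ^ r : ℕ) : ℝ) := by rw [h]
    push_cast at h'
    linarith
  have h3 : 0 ≤ ∑ i ∈ Finset.range s, (r.choose i : ℝ) :=
    Finset.sum_nonneg fun i _ => by positivity
  have h4 : ∑ i ∈ Finset.Ico s (r + 1), (r.choose i : ℝ) * p ^ (r - i) * (1 - p) ^ i
      ≤ ∑ i ∈ Finset.Ico s (r + 1), (r.choose i : ℝ) * (p ^ (s + d) * (1 - p) ^ s) := by
    apply Finset.sum_le_sum
    intro i hi
    rw [Finset.mem_Ico] at hi
    rw [mul_assoc]
    apply mul_le_mul_of_nonneg_left _ (by positivity)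
    have e1 : s + d = (r - i) + (i - s) := by omega
    have e2 : (1 - p) ^ i = (1 - p) ^ (i - s) * (1 - p) ^ s := by
      rw [← pow_add]; congr 1; omega
    rw [e1, pow_add, e2, mul_assoc]
    gcongr
    linarith
  rw [← Finset.sum_mul, h2] at h4
  have h5 : (2:ℝ) ^ r * (p ^ (s + d) * (1 - p) ^ s) = (4 * p * (1 - p)) ^ s * (2 * p) ^ d := by
    rw [hr, pow_add, pow_mul, mul_pow, mul_pow, mul_pow, pow_add]; norm_num; ring
  have h6 : 0 ≤ (∑ i ∈ Finset.range s, (r.choose i : ℝ)) * (p ^ (s + d) * (1 - p) ^ s) := by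
    positivity
  unfold B
  linarith

set_option maxHeartbeats 1000000 in
/-- For every real `c > 0` there exists `s₀` such that for all integers `s ≥ s₀`
and all integers `r` with `2s < r < 2s + c√s`, the function `B_{r,s}(p) - 2p + 1`
is strictly positive for all `p ∈ [0,1)`; consequently `(r(s) - 2s)/√s → ∞`. -/
theorem stmt_8 (c : ℝ) (hc : 0 < c) :
    ∃ s₀ : ℕ, ∀ s : ℕ, s₀ ≤ s → ∀ r : ℕ,
      2 * s < r → (r : ℝ) < 2 * s + c * Real.sqrt s →
      ∀ p ∈ Set.Ico (0 : ℝ) 1, 0 < B r s p - 2 * p + 1 := by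
  set a : ℝ := 16 * c + 32 with ha
  set δ : ℝ := Real.exp (-a ^ 2) / 4 with hδ
  have hδ0 : 0 < δ := by positivity
  set V : ℝ := a + c + 1 + (c + 2) / δ ^ 2 with hV
  refine ⟨⌈V ^ 2⌉₊, ?_⟩
  intro s hs r hr1 hr2 p hp
  obtain ⟨d, rfl⟩ : ∃ d, r = 2 * s + d := ⟨r - 2 * s, by omega⟩
  set v : ℝ := Real.sqrt s with hv
  have hvs : v ^ 2 = s := Real.sq_sqrt (by positivity)
  have hquot : 0 < (c + 2) / δ ^ 2 := by positivity
  have ha0 : 0 < a := by positivity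
  have hV0 : 0 < V := by positivity
  have hVv : V ≤ v := by
    apply Real.le_sqrt_of_sq_le
    exact (Nat.le_ceil _).trans (by exact_mod_cast hs)
  have hv0 : 0 < v := hV0.trans_le hVv
  have hd : (d : ℝ) < c * v := by push_cast at hr2; linarith
  have hp0 := hp.1
  have hp1 := hp.2
  have hs1 : 1 ≤ s := by
    rcases Nat.eq_zero_or_pos s with h | h
    · subst h; simp at hvs; linarith
    · exact h
  rcases lt_or_ge p (1 / 2) with hlt | hge
  · have : 0 ≤ B (2 * s + d) s p := by
      unfold B
      apply Finset.sum_nonneg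
      intro i _
      have : 0 ≤ 1 - p := by linarith
      positivity
    linarith
  rcases lt_or_ge (2 * p - 1) δ with hlt | hge2
  · set u : ℝ := a / v with hu
    have hu0 : 0 < u := by positivity
    have hu1 : u ≤ 1 := by
      rw [hu, div_le_one hv0]; linarith
    have huv : u * v = a := by rw [hu]; field_simp
    have hsu : (s : ℝ) * u ^ 2 = a ^ 2 := by rw [← hvs, ← huv]; ring
    have hdu : d * u ≤ c * a := by
      rw [← huv]; nlinarith
    have h1 := B_aux_lower s d p u hge hp1.le hu0 (B_aux_pow s d u hu0 hu1 (by nlinarith))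
    have hexp : ((2 * s + d : ℕ) : ℝ) * (u ^ 2 / 4) ≤ a ^ 2 := by
      push_cast
      have h3 : d * u * u ≤ c * a * 1 := by gcongr
      nlinarith
    have hB0 : 0 < B (2 * s + d) s p := by
      by_contra hneg
      push Not at hneg
      nlinarith [Real.exp_pos (((2 * s + d : ℕ) : ℝ) * (u ^ 2 / 4))]
    have h2 : 1 / 4 ≤ B (2 * s + d) s p * Real.exp (a ^ 2) := by
      refine h1.trans ?_
      gcongr
    have h3 : δ ≤ B (2 * s + d) s p := by
      rw [hδ, Real.exp_neg, div_le_iff₀ (by norm_num), inv_le_iff_one_le_mul₀ (Real.exp_pos _)]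
      linarith
    linarith
  · have h1 := B_aux_tail s d p hge hp1.le
    have hq : 0 < 1 - p := by linarith
    set x : ℝ := 4 * p * (1 - p) with hx
    have hx0 : 0 < x := by positivity
    have hxe : x ≤ Real.exp (-δ ^ 2) := by
      have := Real.add_one_le_exp (-δ ^ 2)
      nlinarith
    have h2 : x ^ s ≤ x * Real.exp ((s - 1 : ℝ) * (-δ ^ 2)) := by
      obtain ⟨t, rfl⟩ : ∃ t, s = t + 1 := ⟨s - 1, by omega⟩
      have : ((t + 1 : ℕ) : ℝ) - 1 = t := by push_cast; ring
      rw [this, Real.exp_nat_mul, pow_succ, mul_comm]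
      gcongr
    have h3 : (2 * p) ^ d ≤ Real.exp d := by
      have h := Real.exp_nat_mul 1 d
      rw [mul_one] at h
      rw [h]
      apply pow_le_pow_left₀ (by positivity)
      linarith [Real.add_one_le_exp 1]
    have h4 : (s - 1 : ℝ) * (-δ ^ 2) + d ≤ -1 := by
      have h5 : (c + 2) ≤ δ ^ 2 * (v - 1) := by
        have : (c + 2) / δ ^ 2 ≤ v - 1 := by linarith
        rw [div_le_iff₀ (by positivity)] at this
        linarith
      have h6 := mul_le_mul_of_nonneg_right h5 (show 0 ≤ v + 1 by linarith)
      rw [← hvs]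
      nlinarith
    have h7 : Real.exp (-1) < 1 / 2 := by
      rw [Real.exp_neg, inv_lt_comm₀ (Real.exp_pos _) (by norm_num)]
      linarith [Real.add_one_lt_exp (one_ne_zero : (1:ℝ) ≠ 0)]
    have h8 : x ^ s * (2 * p) ^ d < 2 * (1 - p) := by
      calc x ^ s * (2 * p) ^ d
          ≤ (x * Real.exp ((s - 1 : ℝ) * (-δ ^ 2))) * Real.exp d := by gcongr
        _ = x * Real.exp ((s - 1 : ℝ) * (-δ ^ 2) + d) := by rw [Real.exp_add]; ring
        _ ≤ x * Real.exp (-1) := by gcongr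
        _ < x * (1 / 2) := by gcongr
        _ = 2 * (1 - p) * p := by rw [hx]; ring
        _ ≤ 2 * (1 - p) * 1 := by gcongr
        _ = 2 * (1 - p) := mul_one _
    linarith
end

section
/- Let (Ω, ℱ, P) be a probability space with a filtration (ℱ_m)_{m≥1}, and for each integer k ≥ 0 let (F_m(k))_{m≥1} be an adapted integer-valued process satisfying: F_m(0) = 0 and 0 ≤ F_m(k−1) ≤ F_m(k) ≤ 2m for all m and k ≥ 1; and for each k ≥ 1 and m ≥ 1, almost surely the conditional distribution of F_{m+1}(k) − F_m(k) given ℱ_m assigns probability 1 − B_{r,s}(F_m(k)/2m) to the value 1, probability B_{r,s}(F_m(k)/2m) − B_{r,s}(F_m(k−1)/2m) to the value 1−k, and probability B_{r,s}(F_m(k−1)/2m) to the value 2. Then for every ε > 0, every integer k ≥ 0 and every α < 1, there is a constant C such that for all m ≥ 1, P( |F_{m'}(k)/2m' − p_k| < ε for all m' ≥ m ) ≥ 1 − C·exp(−m^α). -/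
/-- `f k (x, p) = (k+1) B_{r,s}(p) - k B_{r,s}(x) - 2x + 1`. -/
noncomputable def f (r s k : ℕ) (x p : ℝ) : ℝ :=
  ((k : ℝ) + 1) * B r s p - (k : ℝ) * B r s x - 2 * x + 1

open MeasureTheory

lemma B_hasDerivAt (r s : ℕ) (x : ℝ) :
    HasDerivAt (B r s) ((s : ℝ) * (r.choose s : ℝ) * x ^ (r - s) * (1 - x) ^ (s - 1)) x := by
  induction s with
  | zero =>
    have : B r 0 = fun _ => 0 := by funext y; simp [B]
    rw [this]; simpa using hasDerivAt_const x (0 : ℝ)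
  | succ s ih =>
    have h : B r (s + 1) = fun y => B r s y + (r.choose s : ℝ) * y ^ (r - s) * (1 - y) ^ s := by
      funext y; simp [B, Finset.sum_range_succ]
    rw [h]
    have h1 : HasDerivAt (fun y : ℝ => y ^ (r - s)) (((r - s : ℕ) : ℝ) * x ^ (r - s - 1)) x :=
      hasDerivAt_pow (r - s) x
    have h2 : HasDerivAt (fun y : ℝ => (1 - y) ^ s) ((s : ℝ) * (1 - x) ^ (s - 1) * (-1)) x := by
      simpa using ((hasDerivAt_id x).const_sub 1).fun_pow s
    have h3 := ih.add ((h1.const_mul (r.choose s : ℝ)).mul h2)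
    refine h3.congr_deriv ?_
    have hc : ((r.choose (s + 1) : ℕ) : ℝ) * ((s : ℝ) + 1) = (r.choose s : ℝ) * ((r - s : ℕ) : ℝ) := by
      exact_mod_cast Nat.choose_succ_right_eq r s
    rw [Nat.sub_sub]
    simp only [Nat.add_sub_cancel]
    push_cast
    linear_combination (-(x ^ (r - (s + 1)) * (1 - x) ^ s)) * hc

lemma B_continuous (r s : ℕ) : Continuous (B r s) := by
  unfold B; fun_prop

lemma B_mono (r s : ℕ) : MonotoneOn (B r s) (Set.Icc 0 1) := by
  apply monotoneOn_of_deriv_nonneg (convex_Icc 0 1) (B_continuous r s).continuousOn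
  · intro x _; exact (B_hasDerivAt r s x).differentiableAt.differentiableWithinAt
  · intro x hx
    rw [interior_Icc] at hx
    rw [(B_hasDerivAt r s x).deriv]
    have h1 : 0 ≤ x := hx.1.le
    have h2 : 0 ≤ 1 - x := by linarith [hx.2]
    positivity

lemma B_nonneg (r s : ℕ) {x : ℝ} (hx : x ∈ Set.Icc (0 : ℝ) 1) : 0 ≤ B r s x := by
  unfold B
  have h1 : 0 ≤ x := hx.1
  have h2 : 0 ≤ 1 - x := by linarith [hx.2]
  positivity

lemma B_le_one (r s : ℕ) {x : ℝ} (hx : x ∈ Set.Icc (0 : ℝ) 1) : B r s x ≤ 1 := by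
  refine (B_mono r s hx ⟨zero_le_one, le_rfl⟩ hx.2).trans ?_
  unfold B
  rcases s with _ | s
  · simp
  · rw [Finset.sum_range_succ']; simp

lemma exp_le_quad {u : ℝ} (hu : |u| ≤ 1) : Real.exp u ≤ 1 + u + u ^ 2 := by
  have := Real.abs_exp_sub_one_sub_id_le hu
  linarith [(abs_le.1 this).2]

/-- moment generating function bound for a three-point law -/
lemma mgf_bound {b₁ b₂ b₃ u₁ u₂ u₃ L : ℝ} (hb₁ : 0 ≤ b₁) (hb₂ : 0 ≤ b₂) (hb₃ : 0 ≤ b₃)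
    (hb : b₁ + b₂ + b₃ = 1) (hL : L ≤ 1) (h₁ : |u₁| ≤ L) (h₂ : |u₂| ≤ L) (h₃ : |u₃| ≤ L) :
    Real.exp u₁ * b₁ + Real.exp u₂ * b₂ + Real.exp u₃ * b₃
      ≤ 1 + (u₁ * b₁ + u₂ * b₂ + u₃ * b₃) + L ^ 2 := by
  have key : ∀ u b : ℝ, 0 ≤ b → |u| ≤ L → Real.exp u * b ≤ (1 + u + L ^ 2) * b := by
    intro u b hb hu
    apply mul_le_mul_of_nonneg_right _ hb
    have h1 := exp_le_quad (hu.trans hL)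
    have h2 : u ^ 2 ≤ L ^ 2 := sq_le_sq' (by linarith [(abs_le.1 hu).1]) (abs_le.1 hu).2
    linarith
  have e1 := key u₁ b₁ hb₁ h₁
  have e2 := key u₂ b₂ hb₂ h₂
  have e3 := key u₃ b₃ hb₃ h₃
  have : b₃ = 1 - b₁ - b₂ := by linarith
  subst this
  linarith

lemma three_bound {b₁ b₂ b₃ u₁ u₂ u₃ L : ℝ} (hb₁ : 0 ≤ b₁) (hb₂ : 0 ≤ b₂) (hb₃ : 0 ≤ b₃)
    (hb : b₁ + b₂ + b₃ = 1) (hL : L ≤ 1) (h₁ : |u₁| ≤ L) (h₂ : |u₂| ≤ L) (h₃ : |u₃| ≤ L) :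
    Real.exp u₁ * b₁ + Real.exp u₂ * b₂ + Real.exp u₃ * b₃ ≤ 3 := by
  have key : ∀ u b : ℝ, 0 ≤ b → |u| ≤ L → Real.exp u * b ≤ 3 * b := by
    intro u b hb hu
    apply mul_le_mul_of_nonneg_right _ hb
    calc Real.exp u ≤ Real.exp 1 := Real.exp_le_exp.2 (by linarith [(abs_le.1 hu).2])
      _ ≤ 3 := by linarith [Real.exp_one_lt_d9]
  linarith [key u₁ b₁ hb₁ h₁, key u₂ b₂ hb₂ h₂, key u₃ b₃ hb₃ h₃]

lemma condExp_integral_mul {Ω : Type*} {mG mΩ : MeasurableSpace Ω} (P : Measure Ω)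
    [IsProbabilityMeasure P] (hG : mG ≤ mΩ) {g I b : Ω → ℝ} (hg : StronglyMeasurable[mG] g)
    {M : ℝ} (hM : ∀ ω, |g ω| ≤ M) (hI : Integrable I P) (hb : P[I | mG] =ᵐ[P] b) :
    Integrable (fun ω => g ω * I ω) P ∧ Integrable (fun ω => g ω * b ω) P ∧
    ∫ ω, g ω * I ω ∂P = ∫ ω, g ω * b ω ∂P := by
  have hgI : Integrable (g * I) P :=
    hI.bdd_mul (hg.mono hG).aestronglyMeasurable (c := M) (Filter.Eventually.of_forall (by simpa using hM))
  have h1 := condExp_mul_of_stronglyMeasurable_left hg hgI hI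
  have h2 : P[g * I | mG] =ᵐ[P] fun ω => g ω * b ω := by
    filter_upwards [h1, hb] with ω a c
    rw [a, Pi.mul_apply, c]
  refine ⟨hgI, (integrable_condExp.congr h2), ?_⟩
  rw [← integral_congr_ae h2, integral_condExp hG]; rfl

lemma key_integral {Ω : Type*} {mG mΩ : MeasurableSpace Ω} (P : Measure Ω)
    [IsProbabilityMeasure P] (hG : mG ≤ mΩ) (k : ℕ) (hk : 1 ≤ k) (X : Ω → ℤ) (hX : Measurable X)
    (b₁ b₂ b₃ : Ω → ℝ)
    (h₁ : P[Set.indicator {ω | X ω = 1} (fun _ => (1 : ℝ)) | mG] =ᵐ[P] b₁)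
    (h₂ : P[Set.indicator {ω | X ω = 1 - (k : ℤ)} (fun _ => (1 : ℝ)) | mG] =ᵐ[P] b₂)
    (h₃ : P[Set.indicator {ω | X ω = 2} (fun _ => (1 : ℝ)) | mG] =ᵐ[P] b₃)
    (hb : ∀ ω, b₁ ω + b₂ ω + b₃ ω = 1)
    (g : Ω → ℝ) (hg : StronglyMeasurable[mG] g) {M : ℝ} (hM : ∀ ω, |g ω| ≤ M) (h : ℤ → ℝ) :
    Integrable (fun ω => g ω * (h 1 * b₁ ω + h (1 - k) * b₂ ω + h 2 * b₃ ω)) P ∧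
    ∫ ω, g ω * h (X ω) ∂P = ∫ ω, g ω * (h 1 * b₁ ω + h (1 - k) * b₂ ω + h 2 * b₃ ω) ∂P := by
  have hIint : ∀ j : ℤ, Integrable (Set.indicator {ω | X ω = j} (fun _ => (1 : ℝ))) P := fun j =>
    (integrable_const 1).indicator (hX (measurableSet_singleton j))
  set I : ℤ → Ω → ℝ := fun j => Set.indicator {ω | X ω = j} (fun _ => (1 : ℝ)) with hI
  obtain ⟨i1, j1, e1⟩ := condExp_integral_mul P hG hg hM (hIint 1) h₁
  obtain ⟨i2, j2, e2⟩ := condExp_integral_mul P hG hg hM (hIint (1 - k)) h₂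
  obtain ⟨i3, j3, e3⟩ := condExp_integral_mul P hG hg hM (hIint 2) h₃
  -- almost surely one of the three values occurs
  have hle : ∀ ω, I 1 ω + I (1 - k) ω + I 2 ω ≤ 1 := by
    intro ω
    simp only [hI, Set.indicator_apply, Set.mem_ofPred_eq]
    split_ifs <;> first | omega | norm_num
  have hsum : ∫ ω, (1 - (I 1 ω + I (1 - k) ω + I 2 ω)) ∂P = 0 := by
    have t1 : ∀ (j : ℤ) (b : Ω → ℝ), P[I j | mG] =ᵐ[P] b → Integrable b P ∧ ∫ ω, I j ω ∂P = ∫ ω, b ω ∂P := by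
      intro j b hb
      exact ⟨integrable_condExp.congr hb, by rw [← integral_congr_ae hb, integral_condExp hG]⟩
    obtain ⟨q1, w1⟩ := t1 _ _ h₁
    obtain ⟨q2, w2⟩ := t1 _ _ h₂
    obtain ⟨q3, w3⟩ := t1 _ _ h₃
    have i12 : Integrable (fun ω => I 1 ω + I (1 - k) ω) P := (hIint 1).add (hIint (1 - k))
    have i123 : Integrable (fun ω => I 1 ω + I (1 - k) ω + I 2 ω) P := i12.add (hIint 2)
    have q12 : Integrable (fun ω => b₁ ω + b₂ ω) P := q1.add q2
    rw [integral_sub (integrable_const _) i123, integral_add i12 (hIint 2),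
      integral_add (hIint 1) (hIint (1 - k)), w1, w2, w3, ← integral_add q1 q2,
      ← integral_add q12 q3]
    simp [hb]
  have hae : ∀ᵐ ω ∂P, 1 - (I 1 ω + I (1 - k) ω + I 2 ω) = 0 := by
    have := (integral_eq_zero_iff_of_nonneg (μ := P)
      (f := fun ω => 1 - (I 1 ω + I (1 - k) ω + I 2 ω)) (fun ω => by simpa using hle ω)
      ((integrable_const _).sub (((hIint 1).add (hIint (1 - k))).add (hIint 2)))).1 hsum
    exact this
  have hval : (fun ω => g ω * h (X ω)) =ᵐ[P]
      fun ω => h 1 * (g ω * I 1 ω) + h (1 - k) * (g ω * I (1 - k) ω) + h 2 * (g ω * I 2 ω) := by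
    filter_upwards [hae] with ω hω
    simp only [hI, Set.indicator_apply, Set.mem_ofPred_eq] at hω ⊢
    split_ifs at hω ⊢ with a b c <;> first | omega | (norm_num at hω) | skip
    all_goals first | (rw [a]; ring) | (rw [b]; ring) | (rw [‹X ω = 2›]; ring) | (rw [‹X ω = 1 - k›]; ring)
  have hre : (fun ω => g ω * (h 1 * b₁ ω + h (1 - k) * b₂ ω + h 2 * b₃ ω)) =
      fun ω => h 1 * (g ω * b₁ ω) + h (1 - k) * (g ω * b₂ ω) + h 2 * (g ω * b₃ ω) := by
    funext ω; ring
  have c1 := j1.const_mul (h 1)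
  have c2 := j2.const_mul (h (1 - k))
  have c3 := j3.const_mul (h 2)
  have d1 := i1.const_mul (h 1)
  have d2 := i2.const_mul (h (1 - k))
  have d3 := i3.const_mul (h 2)
  refine ⟨by rw [hre]; exact (c1.add c2).add c3, ?_⟩
  rw [integral_congr_ae hval, hre]
  rw [integral_add (d1.add d2 : Integrable (fun ω => _ + _) P) d3, integral_add d1 d2,
    integral_add (c1.add c2 : Integrable (fun ω => _ + _) P) c3, integral_add c1 c2]
  simp only [integral_const_mul]
  rw [e1, e2, e3]

lemma rpow_le_linear {α c : ℝ} (hα : α < 1) (hc : 0 < c) :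
    ∃ N : ℝ, ∀ m : ℕ, 1 ≤ m → (m : ℝ) ^ α ≤ c * m + N := by
  have h1 : Filter.Tendsto (fun x : ℝ => x ^ (-(1 - α))) Filter.atTop (nhds 0) :=
    tendsto_rpow_neg_atTop (by linarith)
  obtain ⟨N, hN⟩ := Filter.eventually_atTop.1 (h1.eventually (gt_mem_nhds hc))
  refine ⟨|N|, fun m hm => ?_⟩
  have hm1 : (1 : ℝ) ≤ m := by exact_mod_cast hm
  have hm0 : (0 : ℝ) < m := by linarith
  rcases le_total N m with h | h
  · have h2 := hN m h
    have h3 : (m : ℝ) ^ α = (m : ℝ) ^ (-(1 - α)) * m := by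
      conv_rhs => rw [← Real.rpow_one (m : ℝ), ← Real.rpow_mul hm0.le, one_mul, ← Real.rpow_add hm0]
      congr 1; ring
    rw [h3]
    have := mul_le_mul_of_nonneg_right h2.le hm0.le
    linarith [abs_nonneg N]
  · have h2 : (m : ℝ) ^ α ≤ m := by
      simpa using Real.rpow_le_rpow_of_exponent_le hm1 hα.le
    have := le_abs_self N
    nlinarith


lemma u_bound {k : ℕ} (hk : 1 ≤ k) {q l σ : ℝ} (hq : q ∈ Set.Icc (0 : ℝ) 1) (hl : 0 < l)
    (hσ : σ = 1 ∨ σ = -1) {j : ℝ} (hj : j = 1 ∨ j = 1 - k ∨ j = 2) :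
    |l * σ * (j - 2 * q)| ≤ l * (k + 2) := by
  have h1 : |σ| = 1 := by rcases hσ with h | h <;> simp [h]
  rw [abs_mul, abs_mul, h1, abs_of_pos hl, mul_one]
  apply mul_le_mul_of_nonneg_left _ hl.le
  have hk' : (1 : ℝ) ≤ k := by exact_mod_cast hk
  obtain ⟨h0, h2⟩ := hq
  rw [abs_le]
  rcases hj with h | h | h <;> subst h <;> constructor <;> linarith

lemma ptw (r s k : ℕ) (hk : 1 ≤ k) {q q' x y l σ ε : ℝ} (hq : q ∈ Set.Icc (0 : ℝ) 1)
    (hf : f r s k q q' = 0)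
    (hx : x ∈ Set.Icc (0 : ℝ) 1) (hy : y ∈ Set.Icc (0 : ℝ) 1) (hyx : y ≤ x)
    (hl : 0 < l) (hlK : l * (k + 2) ≤ 1) (hlK2 : l * (k + 2) ^ 2 ≤ ε / 4)
    (hσ : σ = 1 ∨ σ = -1) (hη : (k + 1) * |B r s y - B r s q'| ≤ ε / 4)
    (hxq : 0 ≤ σ * (x - q)) :
    Real.exp (l * σ * (1 - 2 * q)) * (1 - B r s x)
      + Real.exp (l * σ * (1 - k - 2 * q)) * (B r s x - B r s y)
      + Real.exp (l * σ * (2 - 2 * q)) * B r s y ≤ Real.exp (l * ε / 2) := by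
  have h1 := mgf_bound (b₁ := 1 - B r s x) (b₂ := B r s x - B r s y) (b₃ := B r s y)
    (by linarith [B_le_one r s hx]) (by linarith [B_mono r s hy hx hyx]) (B_nonneg r s hy)
    (by ring) hlK (u_bound hk hq hl hσ (j := 1) (by simp))
    (u_bound hk hq hl hσ (j := 1 - k) (by simp)) (u_bound hk hq hl hσ (j := 2) (by simp))
  refine h1.trans ?_
  have h2 : l * σ * (1 - 2 * q) * (1 - B r s x) + l * σ * (1 - k - 2 * q) * (B r s x - B r s y)
      + l * σ * (2 - 2 * q) * B r s y =
      l * (σ * (-(k * (B r s x - B r s q)) + (k + 1) * (B r s y - B r s q'))) := by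
    unfold f at hf
    linear_combination (l * σ) * hf
  have h3 : σ * (-(k * (B r s x - B r s q)) + (k + 1) * (B r s y - B r s q')) ≤ ε / 4 := by
    have hk0 : (0 : ℝ) ≤ k := by positivity
    rcases hσ with h | h <;> subst h
    · have := B_mono r s hq hx (by linarith)
      have t := mul_nonneg hk0 (sub_nonneg.2 this)
      have t2 := mul_le_mul_of_nonneg_left (le_abs_self (B r s y - B r s q')) (by positivity : (0 : ℝ) ≤ k + 1)
      linarith
    · have := B_mono r s hx hq (by linarith)
      have t := mul_nonneg hk0 (sub_nonneg.2 this)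
      have t2 := mul_le_mul_of_nonneg_left (neg_abs_le (B r s y - B r s q')) (by positivity : (0 : ℝ) ≤ k + 1)
      linarith
  rw [h2]
  have h4 := mul_le_mul_of_nonneg_left h3 hl.le
  have h5 := mul_le_mul_of_nonneg_left hlK2 hl.le
  have h6 := Real.add_one_le_exp (l * ε / 2)
  nlinarith

lemma one_sided (r s k : ℕ) (hk : 1 ≤ k) {q q' : ℝ} (hq : q ∈ Set.Icc (0 : ℝ) 1)
    (hf : f r s k q q' = 0)
    {Ω : Type*} {mΩ : MeasurableSpace Ω} (P : Measure Ω) [IsProbabilityMeasure P]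
    (ℱ : Filtration ℕ mΩ) (X Y : ℕ → Ω → ℤ)
    (hX : ∀ m, Measurable[ℱ m] (fun ω => (X m ω : ℝ)))
    (hXm : ∀ m, Measurable (X m))
    (hYm : ∀ m, Measurable (Y m))
    (hY0 : ∀ m ω, 0 ≤ Y m ω) (hYX : ∀ m ω, Y m ω ≤ X m ω) (hX2 : ∀ m ω, X m ω ≤ 2 * m)
    (hcond1 : ∀ m : ℕ, 1 ≤ m → ∀ᵐ ω ∂P,
      (P[Set.indicator {ω' | X (m + 1) ω' - X m ω' = 1} (fun _ => (1 : ℝ)) | ℱ m]) ω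
        = 1 - B r s ((X m ω : ℝ) / (2 * m)))
    (hcond2 : ∀ m : ℕ, 1 ≤ m → ∀ᵐ ω ∂P,
      (P[Set.indicator {ω' | X (m + 1) ω' - X m ω' = 1 - (k : ℤ)} (fun _ => (1 : ℝ)) | ℱ m]) ω
        = B r s ((X m ω : ℝ) / (2 * m)) - B r s ((Y m ω : ℝ) / (2 * m)))
    (hcond3 : ∀ m : ℕ, 1 ≤ m → ∀ᵐ ω ∂P,
      (P[Set.indicator {ω' | X (m + 1) ω' - X m ω' = 2} (fun _ => (1 : ℝ)) | ℱ m]) ω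
        = B r s ((Y m ω : ℝ) / (2 * m)))
    (hY : ∀ ε : ℝ, 0 < ε → ∃ C c : ℝ, 0 ≤ C ∧ 0 < c ∧ ∀ m : ℕ, 1 ≤ m →
      P.real {ω | ε ≤ |(Y m ω : ℝ) / (2 * m) - q'|} ≤ C * Real.exp (-(c * m)))
    {σ : ℝ} (hσ : σ = 1 ∨ σ = -1) {ε : ℝ} (hε : 0 < ε) :
    ∃ C c : ℝ, 0 ≤ C ∧ 0 < c ∧ ∀ m : ℕ, 1 ≤ m →
      P.real {ω | ε ≤ σ * ((X m ω : ℝ) / (2 * m) - q)} ≤ C * Real.exp (-(c * m)) := by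
  have hk1 : (0 : ℝ) < k + 1 := by positivity
  obtain ⟨δ, hδ, hδB⟩ := Metric.continuous_iff.1 (B_continuous r s) q' (ε / 4 / (k + 1)) (by positivity)
  obtain ⟨C, c, hC, hc, hbad⟩ := hY δ hδ
  obtain ⟨l, hl, hl1, hl2, hl3⟩ : ∃ l : ℝ, 0 < l ∧ l * (k + 2) ≤ 1 ∧ l * (k + 2) ^ 2 ≤ ε / 4 ∧ 2 * l ≤ c := by
    refine ⟨min (1 / (k + 2)) (min (ε / 4 / (k + 2) ^ 2) (c / 2)), by positivity, ?_, ?_, ?_⟩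
    · rw [← le_div_iff₀ (by positivity)]; exact min_le_left _ _
    · rw [← le_div_iff₀ (by positivity)]; exact (min_le_right _ _).trans (min_le_left _ _)
    · have : min (1 / ((k : ℝ) + 2)) (min (ε / 4 / (k + 2) ^ 2) (c / 2)) ≤ c / 2 :=
        (min_le_right _ _).trans (min_le_right _ _)
      linarith
  -- exponential potential
  set V : ℕ → Ω → ℝ := fun m ω => Real.exp (l * σ * ((X m ω : ℝ) - 2 * m * q)) with hV
  have hXr : ∀ m ω, (0 : ℝ) ≤ X m ω ∧ (X m ω : ℝ) ≤ 2 * m := by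
    intro m ω
    exact ⟨by exact_mod_cast (hY0 m ω).trans (hYX m ω), by exact_mod_cast hX2 m ω⟩
  have hVbd : ∀ m ω, V m ω ≤ Real.exp (2 * l * m) := by
    intro m ω
    apply Real.exp_le_exp.2
    obtain ⟨h1, h2⟩ := hXr m ω
    have hm : (0 : ℝ) ≤ m := by positivity
    have h3 : 2 * m * q ≤ 2 * m := by nlinarith [hq.2]
    have h4 : 0 ≤ 2 * m * q := mul_nonneg (by positivity) hq.1
    have h5 : σ * ((X m ω : ℝ) - 2 * m * q) ≤ 2 * m := by
      rcases hσ with h | h <;> subst h <;> linarith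
    nlinarith
  have hVm : ∀ m, StronglyMeasurable[ℱ m] (V m) := by
    intro m
    have : Measurable[ℱ m] (V m) := 
      Real.measurable_exp.comp (((hX m).sub_const _).const_mul _)
    exact this.stronglyMeasurable
  have hVabs : ∀ m ω, |V m ω| ≤ Real.exp (2 * l * m) := by
    intro m ω; rw [abs_of_pos (Real.exp_pos _)]; exact hVbd m ω
  have hVint : ∀ m, Integrable (V m) P := fun m =>
    Integrable.of_bound ((hVm m).mono (ℱ.le m)).aestronglyMeasurable (Real.exp (2 * l * m))
      (Filter.Eventually.of_forall (hVabs m))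
  have hrec : ∀ m : ℕ, 1 ≤ m →
      ∫ ω, V (m + 1) ω ∂P ≤ Real.exp (l * ε / 2) * ∫ ω, V m ω ∂P + (3 + 3 * C) := by
    intro m hm
    have hm0 : (0 : ℝ) < m := by exact_mod_cast hm
    have hxI : ∀ ω, (X m ω : ℝ) / (2 * m) ∈ Set.Icc (0 : ℝ) 1 := fun ω =>
      ⟨div_nonneg (hXr m ω).1 (by positivity), (div_le_one (by positivity)).2 (hXr m ω).2⟩
    have hyx : ∀ ω, (Y m ω : ℝ) / (2 * m) ≤ (X m ω : ℝ) / (2 * m) := fun ω => by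
      gcongr; exact_mod_cast hYX m ω
    have hyI : ∀ ω, (Y m ω : ℝ) / (2 * m) ∈ Set.Icc (0 : ℝ) 1 := fun ω =>
      ⟨div_nonneg (by exact_mod_cast hY0 m ω) (by positivity), (hyx ω).trans (hxI ω).2⟩
    obtain ⟨hi, he⟩ := key_integral P (ℱ.le m) k hk (fun ω => X (m + 1) ω - X m ω)
      ((hXm _).sub (hXm _)) _ _ _ (hcond1 m hm) (hcond2 m hm) (hcond3 m hm) (fun ω => by ring)
      (V m) (hVm m) (hVabs m) (fun j => Real.exp (l * σ * ((j : ℝ) - 2 * q)))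
    have hstep : ∀ ω, V (m + 1) ω = V m ω * Real.exp (l * σ * (((X (m + 1) ω - X m ω : ℤ) : ℝ) - 2 * q)) := by
      intro ω
      simp only [hV]
      rw [← Real.exp_add]
      congr 1
      push_cast
      ring
    simp_rw [hstep]
    rw [he]
    set bad : Set Ω := {ω | δ ≤ |(Y m ω : ℝ) / (2 * m) - q'|} with hbaddef
    have hbadm : MeasurableSet bad := by
      have : Measurable fun ω => (Y m ω : ℝ) := (measurable_from_top (f := fun z : ℤ => (z : ℝ))).comp (hYm m)
      exact measurableSet_le measurable_const (by fun_prop)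
    have hbint : Integrable (bad.indicator fun _ => 3 * Real.exp (2 * l * m)) P :=
      (integrable_const _).indicator hbadm
    have hpt : ∀ ω, V m ω * (Real.exp (l * σ * (((1 : ℤ) : ℝ) - 2 * q)) * (1 - B r s ((X m ω : ℝ) / (2 * m)))
        + Real.exp (l * σ * (((1 - k : ℤ) : ℝ) - 2 * q)) * (B r s ((X m ω : ℝ) / (2 * m)) - B r s ((Y m ω : ℝ) / (2 * m)))
        + Real.exp (l * σ * (((2 : ℤ) : ℝ) - 2 * q)) * B r s ((Y m ω : ℝ) / (2 * m)))
        ≤ Real.exp (l * ε / 2) * V m ω + 3 + bad.indicator (fun _ => 3 * Real.exp (2 * l * m)) ω := by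
      intro ω
      push_cast
      have hV0 : 0 < V m ω := Real.exp_pos _
      have hEV : 0 < Real.exp (l * ε / 2) * V m ω := mul_pos (Real.exp_pos _) hV0
      have h3 := three_bound (b₁ := 1 - B r s ((X m ω : ℝ) / (2 * m)))
        (b₂ := B r s ((X m ω : ℝ) / (2 * m)) - B r s ((Y m ω : ℝ) / (2 * m)))
        (b₃ := B r s ((Y m ω : ℝ) / (2 * m)))
        (by linarith [B_le_one r s (hxI ω)]) (by linarith [B_mono r s (hyI ω) (hxI ω) (hyx ω)])
        (B_nonneg r s (hyI ω))
        (by ring) hl1 (u_bound hk hq hl hσ (j := 1) (by simp))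
        (u_bound hk hq hl hσ (j := 1 - k) (by simp)) (u_bound hk hq hl hσ (j := 2) (by simp))
      by_cases hb : ω ∈ bad
      · rw [Set.indicator_of_mem hb]
        have h4 := mul_le_mul_of_nonneg_left h3 hV0.le
        have h5 := hVbd m ω
        linarith
      · rw [Set.indicator_of_notMem hb]
        by_cases hs : 0 ≤ σ * ((X m ω : ℝ) / (2 * m) - q)
        · have hb' : |(Y m ω : ℝ) / (2 * m) - q'| < δ := by
            simpa [hbaddef] using hb
          have h6 := hδB ((Y m ω : ℝ) / (2 * m)) (by rwa [Real.dist_eq])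
          rw [Real.dist_eq, lt_div_iff₀ hk1] at h6
          have h7 := ptw r s k hk hq hf (hxI ω) (hyI ω) (hyx ω) hl hl1 hl2 hσ (by linarith) hs
          have h4 := mul_le_mul_of_nonneg_left h7 hV0.le
          linarith
        · have hV1 : V m ω ≤ 1 := by
            apply Real.exp_le_one_iff.2
            have : l * σ * ((X m ω : ℝ) - 2 * m * q) =
              (l * (2 * m)) * (σ * ((X m ω : ℝ) / (2 * m) - q)) := by
              field_simp
            rw [this]
            exact mul_nonpos_of_nonneg_of_nonpos (by positivity) (not_le.1 hs).le
          have h4 := mul_le_mul_of_nonneg_left h3 hV0.le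
          linarith
    have hR : Integrable (fun ω => Real.exp (l * ε / 2) * V m ω + 3) P :=
      ((hVint m).const_mul _).add (integrable_const _)
    refine (integral_mono hi (hR.add hbint) hpt).trans ?_
    simp only [Pi.add_apply]
    rw [integral_add hR hbint, integral_add ((hVint m).const_mul _) (integrable_const _),
      integral_const_mul, integral_indicator_const _ hbadm]
    simp only [integral_const, probReal_univ, smul_eq_mul, one_mul]
    have h8 : P.real bad * (3 * Real.exp (2 * l * m)) ≤ 3 * C := by
      have h9 := mul_le_mul_of_nonneg_right (hbad m hm) (by positivity : 0 ≤ 3 * Real.exp (2 * l * m))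
      refine h9.trans ?_
      have : C * Real.exp (-(c * m)) * (3 * Real.exp (2 * l * m)) = 3 * C * Real.exp (-(c * m) + 2 * l * m) := by
        rw [Real.exp_add]; ring
      rw [this]
      have h10 : Real.exp (-(c * m) + 2 * l * m) ≤ 1 := Real.exp_le_one_iff.2 (by nlinarith)
      nlinarith
    linarith
  -- solve the recursion
  have hgap : 0 < Real.exp (l * ε) - Real.exp (l * ε / 2) := by
    have : l * ε / 2 < l * ε := by nlinarith [mul_pos hl hε]
    linarith [Real.exp_lt_exp.2 this]
  set A : ℝ := max (Real.exp (2 * l)) ((3 + 3 * C) / (Real.exp (l * ε) - Real.exp (l * ε / 2))) with hA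
  have hA0 : 0 < A := lt_of_lt_of_le (Real.exp_pos _) (le_max_left _ _)
  have hA2 : 3 + 3 * C ≤ A * (Real.exp (l * ε) - Real.exp (l * ε / 2)) :=
    (div_le_iff₀ hgap).1 (le_max_right _ _)
  have hVA : ∀ m : ℕ, 1 ≤ m → ∫ ω, V m ω ∂P ≤ A * Real.exp (l * ε * m) := by
    intro m hm
    induction m, hm using Nat.le_induction with
    | base =>
      have h1 : ∫ ω, V 1 ω ∂P ≤ ∫ _ω, Real.exp (2 * l) ∂P :=
        integral_mono (hVint 1) (integrable_const _) (fun ω => by simpa using hVbd 1 ω)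
      simp only [integral_const, probReal_univ, smul_eq_mul, one_mul] at h1
      have h2 : 1 ≤ Real.exp (l * ε * (1 : ℕ)) := Real.one_le_exp (by positivity)
      nlinarith [le_max_left (Real.exp (2 * l)) ((3 + 3 * C) / (Real.exp (l * ε) - Real.exp (l * ε / 2)))]
    | succ m hm ih =>
      refine (hrec m hm).trans ?_
      have h1 := mul_le_mul_of_nonneg_left ih (Real.exp_pos (l * ε / 2)).le
      have h2 : 1 ≤ Real.exp (l * ε * m) := Real.one_le_exp (by positivity)
      have h3 : Real.exp (l * ε * ((m + 1 : ℕ) : ℝ)) = Real.exp (l * ε * m) * Real.exp (l * ε) := by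
        rw [← Real.exp_add]; push_cast; ring_nf
      rw [h3]
      have h4 : 0 ≤ A * (Real.exp (l * ε) - Real.exp (l * ε / 2)) := by positivity
      have h5 := le_mul_of_one_le_right h4 h2
      linarith
  refine ⟨A, l * ε, hA0.le, mul_pos hl hε, fun m hm => ?_⟩
  have hm0 : (0 : ℝ) < m := by exact_mod_cast hm
  have hmark := mul_meas_ge_le_integral_of_nonneg (μ := P) (f := V m)
    (Filter.Eventually.of_forall fun ω => (Real.exp_pos _).le) (hVint m) (Real.exp (2 * l * ε * m))
  have hsub : P.real {ω | ε ≤ σ * ((X m ω : ℝ) / (2 * m) - q)} ≤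
      P.real {ω | Real.exp (2 * l * ε * m) ≤ V m ω} := by
    apply measureReal_mono
    · intro ω hω
      simp only [Set.mem_ofPred_eq] at hω ⊢
      apply Real.exp_le_exp.2
      have : l * σ * ((X m ω : ℝ) - 2 * m * q) =
        (l * (2 * m)) * (σ * ((X m ω : ℝ) / (2 * m) - q)) := by
        field_simp
      rw [this]
      have := mul_le_mul_of_nonneg_left hω (by positivity : 0 ≤ l * (2 * m))
      linarith
    · finiteness
  have h1 := (mul_le_mul_of_nonneg_left hsub (Real.exp_pos (2 * l * ε * m)).le).trans
    (hmark.trans (hVA m hm))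
  have h2 : A * Real.exp (-(l * ε * m)) * Real.exp (2 * l * ε * m) = A * Real.exp (l * ε * m) := by
    rw [mul_assoc, ← Real.exp_add]; ring_nf
  have h3 : 0 < Real.exp (2 * l * ε * m) := Real.exp_pos _
  rw [← h2, mul_comm] at h1
  exact le_of_mul_le_mul_right h1 h3

/-- Convergence of the degree distribution (Theorem 3 of the paper), stated for any
adapted integer-valued process `F` with the transition law of Lemma 1: given `ℱ_m`,
the increment `F_{m+1}(k) - F_m(k)` equals `1` with probability
`1 - B_{r,s}(F_m(k)/2m)`, equals `1 - k` with probability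
`B_{r,s}(F_m(k)/2m) - B_{r,s}(F_m(k-1)/2m)`, and equals `2` with probability
`B_{r,s}(F_m(k-1)/2m)`. Then for every `ε > 0`, `k ≥ 0` and `α < 1`, there is a
constant `C` with `P(|F_{m'}(k)/2m' - p_k| < ε for all m' ≥ m) ≥ 1 - C·exp(-m^α)`
for all `m ≥ 1`. -/
theorem stmt_19 (r s : ℕ) (hs : 1 ≤ s) (hrs : s ≤ r)
    (p : ℕ → ℝ) (hp0 : p 0 = 0)
    (hp : ∀ k, 1 ≤ k → p k ∈ Set.Ioo (0 : ℝ) 1 ∧ f r s k (p k) (p (k - 1)) = 0)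
    {Ω : Type*} {mΩ : MeasurableSpace Ω} (P : Measure Ω) [IsProbabilityMeasure P]
    (ℱ : Filtration ℕ mΩ)
    (F : ℕ → ℕ → Ω → ℤ)
    (hadapted : ∀ k : ℕ, Adapted ℱ (fun m ω => ((F m k ω : ℤ) : ℝ)))
    (hF0 : ∀ m ω, F m 0 ω = 0)
    (hFnonneg : ∀ m k ω, 0 ≤ F m k ω)
    (hFmono : ∀ m k ω, F m k ω ≤ F m (k + 1) ω)
    (hFbound : ∀ m k ω, F m k ω ≤ 2 * m)
    (hcond1 : ∀ m : ℕ, 1 ≤ m → ∀ k : ℕ, 1 ≤ k → ∀ᵐ ω ∂P,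
      (P[Set.indicator {ω' | F (m + 1) k ω' - F m k ω' = 1} (fun _ => (1 : ℝ)) | ℱ m]) ω
        = 1 - B r s ((F m k ω : ℝ) / (2 * m)))
    (hcond2 : ∀ m : ℕ, 1 ≤ m → ∀ k : ℕ, 1 ≤ k → ∀ᵐ ω ∂P,
      (P[Set.indicator {ω' | F (m + 1) k ω' - F m k ω' = 1 - (k : ℤ)} (fun _ => (1 : ℝ)) | ℱ m]) ω
        = B r s ((F m k ω : ℝ) / (2 * m)) - B r s ((F m (k - 1) ω : ℝ) / (2 * m)))
    (hcond3 : ∀ m : ℕ, 1 ≤ m → ∀ k : ℕ, 1 ≤ k → ∀ᵐ ω ∂P,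
      (P[Set.indicator {ω' | F (m + 1) k ω' - F m k ω' = 2} (fun _ => (1 : ℝ)) | ℱ m]) ω
        = B r s ((F m (k - 1) ω : ℝ) / (2 * m))) :
    ∀ ε : ℝ, 0 < ε → ∀ k : ℕ, ∀ α : ℝ, α < 1 →
      ∃ C : ℝ, ∀ m : ℕ, 1 ≤ m →
        1 - C * Real.exp (-(m : ℝ) ^ α)
          ≤ (P {ω | ∀ m' : ℕ, m ≤ m' →
              |(F m' k ω : ℝ) / (2 * m') - p k| < ε}).toReal := by
  have hrm : ∀ m k, Measurable (fun ω => (F m k ω : ℝ)) := fun m k =>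
    (hadapted k m).mono (ℱ.le m) le_rfl
  have hFm : ∀ m k, Measurable (F m k) := by
    intro m k
    have h1 := Int.measurable_floor.comp (hrm m k)
    have h2 : (Int.floor ∘ fun ω => (F m k ω : ℝ)) = F m k := by
      funext ω; simp
    rwa [h2] at h1
  have hpI : ∀ k, p k ∈ Set.Icc (0 : ℝ) 1 := by
    intro k
    rcases k with _ | k
    · simp [hp0]
    · exact Set.Ioo_subset_Icc_self (hp (k + 1) (by omega)).1
  -- exponential concentration at each fixed time
  have main : ∀ k : ℕ, ∀ ε : ℝ, 0 < ε → ∃ C c : ℝ, 0 ≤ C ∧ 0 < c ∧ ∀ m : ℕ, 1 ≤ m →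
      P.real {ω | ε ≤ |(F m k ω : ℝ) / (2 * m) - p k|} ≤ C * Real.exp (-(c * m)) := by
    intro k
    induction k with
    | zero =>
      intro ε hε
      refine ⟨0, 1, le_rfl, one_pos, fun m _ => ?_⟩
      have : {ω | ε ≤ |(F m 0 ω : ℝ) / (2 * m) - p 0|} = ∅ := by
        ext ω; simp [hF0, hp0, hε]
      rw [this]; simp
    | succ k ih =>
      intro ε hε
      have hos := fun (σ : ℝ) (hσ : σ = 1 ∨ σ = -1) =>
        one_sided r s (k + 1) (by omega) (hpI (k + 1)) (hp (k + 1) (by omega)).2 P ℱ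
          (fun m => F m (k + 1)) (fun m => F m k) (fun m => hadapted (k + 1) m)
          (fun m => hFm m (k + 1)) (fun m => hFm m k) (fun m ω => hFnonneg m k ω)
          (fun m ω => hFmono m k ω) (fun m ω => hFbound m (k + 1) ω)
          (fun m hm => hcond1 m hm (k + 1) (by omega))
          (fun m hm => hcond2 m hm (k + 1) (by omega))
          (fun m hm => hcond3 m hm (k + 1) (by omega)) ih hσ hε
      obtain ⟨C₁, c₁, hC₁, hc₁, h₁⟩ := hos 1 (Or.inl rfl)
      obtain ⟨C₂, c₂, hC₂, hc₂, h₂⟩ := hos (-1) (Or.inr rfl)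
      refine ⟨C₁ + C₂, min c₁ c₂, by positivity, lt_min hc₁ hc₂, fun m hm => ?_⟩
      have hsub : {ω | ε ≤ |(F m (k + 1) ω : ℝ) / (2 * m) - p (k + 1)|} ⊆
          {ω | ε ≤ 1 * ((F m (k + 1) ω : ℝ) / (2 * m) - p (k + 1))} ∪
          {ω | ε ≤ (-1) * ((F m (k + 1) ω : ℝ) / (2 * m) - p (k + 1))} := by
        intro ω hω
        simp only [Set.mem_union, Set.mem_ofPred_eq] at hω ⊢
        rcases le_abs.1 hω with h | h
        · left; linarith
        · right; linarith
      refine (measureReal_mono hsub (by finiteness)).trans ((measureReal_union_le _ _).trans ?_)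
      have e₁ : Real.exp (-(c₁ * m)) ≤ Real.exp (-(min c₁ c₂ * m)) :=
        Real.exp_le_exp.2 (neg_le_neg (by gcongr; exact min_le_left _ _))
      have e₂ : Real.exp (-(c₂ * m)) ≤ Real.exp (-(min c₁ c₂ * m)) :=
        Real.exp_le_exp.2 (neg_le_neg (by gcongr; exact min_le_right _ _))
      have := h₁ m hm
      have := h₂ m hm
      have := mul_le_mul_of_nonneg_left e₁ hC₁
      have := mul_le_mul_of_nonneg_left e₂ hC₂
      linarith
  -- union bound over all later times
  intro ε hε k α hα
  obtain ⟨C, c, hC, hc, hb⟩ := main k ε hε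
  obtain ⟨N, hN⟩ := rpow_le_linear hα hc
  have hρ0 : 0 ≤ Real.exp (-c) := (Real.exp_pos _).le
  have hρ1 : Real.exp (-c) < 1 := by simpa using hc
  have hD : 0 < 1 - Real.exp (-c) := by linarith
  refine ⟨C / (1 - Real.exp (-c)) * Real.exp N, fun m hm => ?_⟩
  set G : Set Ω := {ω | ∀ m' : ℕ, m ≤ m' → |(F m' k ω : ℝ) / (2 * m') - p k| < ε} with hG
  set E : ℕ → Set Ω := fun i => {ω | ε ≤ |(F (m + i) k ω : ℝ) / (2 * (m + i : ℕ)) - p k|} with hE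
  have hGc : Gᶜ = ⋃ i, E i := by
    ext ω
    simp only [hG, hE, Set.mem_compl_iff, Set.mem_ofPred_eq, Set.mem_iUnion, not_forall, not_lt]
    constructor
    · rintro ⟨m', h, h'⟩
      refine ⟨m' - m, ?_⟩
      rwa [Nat.add_sub_cancel' h]
    · rintro ⟨i, hi⟩
      exact ⟨m + i, by omega, hi⟩
  have hEm : ∀ i, MeasurableSet (E i) := by
    intro i
    have := hrm (m + i) k
    exact measurableSet_le measurable_const (by fun_prop)
  have hGm : MeasurableSet G := by
    rw [← MeasurableSet.compl_iff, hGc]; exact MeasurableSet.iUnion hEm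
  have hsum : HasSum (fun i : ℕ => C * Real.exp (-(c * m)) * Real.exp (-c) ^ i)
      (C * Real.exp (-(c * m)) * (1 - Real.exp (-c))⁻¹) :=
    (hasSum_geometric_of_lt_one hρ0 hρ1).mul_left _
  have hEb : ∀ i, P.real (E i) ≤ C * Real.exp (-(c * m)) * Real.exp (-c) ^ i := by
    intro i
    refine (hb (m + i) (by omega)).trans (le_of_eq ?_)
    rw [← Real.exp_nat_mul, mul_assoc, ← Real.exp_add]
    push_cast; ring_nf
  have hGcb : P.real Gᶜ ≤ C * Real.exp (-(c * m)) * (1 - Real.exp (-c))⁻¹ := by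
    rw [hGc, measureReal_def]
    apply ENNReal.toReal_le_of_le_ofReal
    · positivity
    · refine (measure_iUnion_le E).trans ?_
      rw [← hsum.tsum_eq, ENNReal.ofReal_tsum_of_nonneg (fun i => by positivity) hsum.summable]
      refine ENNReal.tsum_le_tsum fun i => ?_
      rw [← ofReal_measureReal]
      exact ENNReal.ofReal_le_ofReal (hEb i)
  have hfin : C * Real.exp (-(c * m)) * (1 - Real.exp (-c))⁻¹ ≤
      C / (1 - Real.exp (-c)) * Real.exp N * Real.exp (-(m : ℝ) ^ α) := by
    have h1 : Real.exp (-(c * m)) ≤ Real.exp N * Real.exp (-(m : ℝ) ^ α) := by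
      rw [← Real.exp_add]
      exact Real.exp_le_exp.2 (by linarith [hN m hm])
    have h2 := mul_le_mul_of_nonneg_left h1 (by positivity : 0 ≤ C * (1 - Real.exp (-c))⁻¹)
    rw [div_eq_mul_inv]
    linarith
  have hcompl := probReal_compl_eq_one_sub (μ := P) hGm
  change _ ≤ P.real G
  linarith
end
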